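/- arXiv:2509.04422 — 6 statements merged into one kernel-verified Lean document; each statement's English description precedes it below -/
import Mathlib

section
/- Let f(x,u) = (1-λ)·x + λ·σ(W·x + U·u + b) denote the leaky ESN update map, with κ := (1−λ) + λ·‖W‖·L_σ and L_u := λ·‖U‖·L_σ. Let (x_t) and (x̄_t) be two trajectories satisfying x_{t+1} = f(x_t, u_t) and x̄_{t+1} = f(x̄_t, ū_t) for input sequences (u_t), (ū_t). Then for all t ≥ 0: ‖x_t − x̄_t‖ ≤ κ^t·‖x_0 − x̄_0‖ + Σ_{k=0}^{t−1} κ^{t−1−k}·L_u·‖u_k − ū_k‖ (incremental input-to-state stability). -/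
/-!
The update map satisfies `‖f x u - f x' u'‖ ≤ κ ‖x - x'‖ + Lu ‖u - u'‖`, by the triangle inequality,
the Lipschitz bound on `σ` and the operator-norm bounds for `W` and `U`. Since `κ ≥ 0`, iterating
this one-step estimate along two trajectories (discrete Grönwall) gives the claim.
-/

open Finset in
/-- Incremental input-to-state stability of the leaky ESN:
for two trajectories `x, x̄` driven by inputs `u, ū`,
`‖x_t − x̄_t‖ ≤ κ^t‖x_0 − x̄_0‖ + Σ_{k<t} κ^{t−1−k} L_u ‖u_k − ū_k‖`,
where `κ = (1−λ) + λ‖W‖L_σ` and `L_u = λ‖U‖L_σ`. -/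
theorem esn_incremental_iss
    (n m : ℕ) (lk : ℝ) (hlk0 : 0 < lk) (hlk1 : lk ≤ 1)
    (W : EuclideanSpace ℝ (Fin n) →L[ℝ] EuclideanSpace ℝ (Fin n))
    (U : EuclideanSpace ℝ (Fin m) →L[ℝ] EuclideanSpace ℝ (Fin n))
    (b : EuclideanSpace ℝ (Fin n))
    (σ : EuclideanSpace ℝ (Fin n) → EuclideanSpace ℝ (Fin n))
    (Lσ : ℝ) (hLσ : 0 ≤ Lσ)
    (hσ : ∀ v v' : EuclideanSpace ℝ (Fin n), ‖σ v - σ v'‖ ≤ Lσ * ‖v - v'‖)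
    (f : EuclideanSpace ℝ (Fin n) → EuclideanSpace ℝ (Fin m) → EuclideanSpace ℝ (Fin n))
    (hf : ∀ x u, f x u = (1 - lk) • x + lk • σ (W x + U u + b))
    (κ Lu : ℝ) (hκ : κ = (1 - lk) + lk * ‖W‖ * Lσ) (hLu : Lu = lk * ‖U‖ * Lσ)
    (u ubar : ℕ → EuclideanSpace ℝ (Fin m))
    (x xbar : ℕ → EuclideanSpace ℝ (Fin n))
    (hx : ∀ t, x (t + 1) = f (x t) (u t))
    (hxbar : ∀ t, xbar (t + 1) = f (xbar t) (ubar t)) :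
    ∀ t : ℕ,
      ‖x t - xbar t‖ ≤
        κ ^ t * ‖x 0 - xbar 0‖ +
          ∑ k ∈ range t, κ ^ (t - 1 - k) * Lu * ‖u k - ubar k‖ := by
  have hκ0 : 0 ≤ κ := by
    have : 0 ≤ 1 - lk := by linarith
    rw [hκ]
    positivity
  have step : ∀ y y' v v', ‖f y v - f y' v'‖ ≤ κ * ‖y - y'‖ + Lu * ‖v - v'‖ := by
    intro y y' v v'
    have harg : ‖(W y + U v + b) - (W y' + U v' + b)‖ ≤ ‖W‖ * ‖y - y'‖ + ‖U‖ * ‖v - v'‖ := by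
      have e : (W y + U v + b) - (W y' + U v' + b) = W (y - y') + U (v - v') := by
        rw [map_sub, map_sub]
        abel
      rw [e]
      exact (norm_add_le _ _).trans (add_le_add (W.le_opNorm _) (U.le_opNorm _))
    have hs := (hσ (W y + U v + b) (W y' + U v' + b)).trans
      (mul_le_mul_of_nonneg_left harg hLσ)
    have e : f y v - f y' v' =
        (1 - lk) • (y - y') + lk • (σ (W y + U v + b) - σ (W y' + U v' + b)) := by
      rw [hf, hf, smul_sub, smul_sub]
      abel
    calc ‖f y v - f y' v'‖
        ≤ (1 - lk) * ‖y - y'‖ + lk * ‖σ (W y + U v + b) - σ (W y' + U v' + b)‖ := by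
          rw [e]
          refine (norm_add_le _ _).trans_eq ?_
          rw [norm_smul_of_nonneg (by linarith), norm_smul_of_nonneg hlk0.le]
      _ ≤ (1 - lk) * ‖y - y'‖ + lk * (Lσ * (‖W‖ * ‖y - y'‖ + ‖U‖ * ‖v - v'‖)) := by
          gcongr
      _ = κ * ‖y - y'‖ + Lu * ‖v - v'‖ := by
          rw [hκ, hLu]
          ring
  intro t
  induction t with
  | zero => simp
  | succ t ih =>
    -- The truncated exponent `t - 1 - k` is harmless: `k < t` throughout the sum.
    have hsum : ∑ k ∈ range t, κ ^ (t + 1 - 1 - k) * Lu * ‖u k - ubar k‖ =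
        κ * ∑ k ∈ range t, κ ^ (t - 1 - k) * Lu * ‖u k - ubar k‖ := by
      rw [mul_sum]
      refine sum_congr rfl fun k hk => ?_
      have hk' := mem_range.mp hk
      rw [show t + 1 - 1 - k = (t - 1 - k) + 1 by omega]
      ring
    have h1 := step (x t) (xbar t) (u t) (ubar t)
    have h2 := mul_le_mul_of_nonneg_left ih hκ0
    rw [hx, hxbar, sum_range_succ, hsum, show t + 1 - 1 - t = 0 by omega, pow_zero, pow_succ]
    linarith
end

section
/- Let f(x,u) = (1-λ)·x + λ·σ(W·x + U·u + b) denote the leaky ESN update map and suppose κ := (1−λ) + λ·‖W‖·L_σ < 1. If (x_t) and (x'_t) are two trajectories driven by the SAME input sequence (u_t), i.e. x_{t+1} = f(x_t, u_t) and x'_{t+1} = f(x'_t, u_t), then ‖x_t − x'_t‖ ≤ κ^t·‖x_0 − x'_0‖ for all t ≥ 0, and consequently ‖x_t − x'_t‖ → 0 as t → ∞ (the Echo State Property holds: forgetting of initial conditions). -/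
/-!
For a fixed input, the update map `f (·, u)` is `κ`-Lipschitz: the input and bias terms cancel in
the difference of the arguments of `σ`, so the triangle inequality gives the factor
`(1 - λ) + λ ‖W‖ L_σ`. Iterating gives the geometric bound, and `0 ≤ κ < 1` gives convergence.
-/

open Filter in
/-- Echo State Property via contraction: if
`κ = (1−λ) + λ‖W‖L_σ < 1` and two trajectories are driven by the same input
sequence, then `‖x_t − x'_t‖ ≤ κ^t ‖x_0 − x'_0‖`, and the difference tends to `0`. -/
theorem esn_echo_state_property
    (n m : ℕ) (lk : ℝ) (hlk0 : 0 < lk) (hlk1 : lk ≤ 1)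
    (W : EuclideanSpace ℝ (Fin n) →L[ℝ] EuclideanSpace ℝ (Fin n))
    (U : EuclideanSpace ℝ (Fin m) →L[ℝ] EuclideanSpace ℝ (Fin n))
    (b : EuclideanSpace ℝ (Fin n))
    (σ : EuclideanSpace ℝ (Fin n) → EuclideanSpace ℝ (Fin n))
    (Lσ : ℝ) (hLσ : 0 ≤ Lσ)
    (hσ : ∀ v v' : EuclideanSpace ℝ (Fin n), ‖σ v - σ v'‖ ≤ Lσ * ‖v - v'‖)
    (f : EuclideanSpace ℝ (Fin n) → EuclideanSpace ℝ (Fin m) → EuclideanSpace ℝ (Fin n))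
    (hf : ∀ x u, f x u = (1 - lk) • x + lk • σ (W x + U u + b))
    (κ : ℝ) (hκ : κ = (1 - lk) + lk * ‖W‖ * Lσ) (hκ1 : κ < 1)
    (u : ℕ → EuclideanSpace ℝ (Fin m))
    (x x' : ℕ → EuclideanSpace ℝ (Fin n))
    (hx : ∀ t, x (t + 1) = f (x t) (u t))
    (hx' : ∀ t, x' (t + 1) = f (x' t) (u t)) :
    (∀ t : ℕ, ‖x t - x' t‖ ≤ κ ^ t * ‖x 0 - x' 0‖) ∧
      Tendsto (fun t : ℕ => ‖x t - x' t‖) atTop (nhds 0) := by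
  have h1 : 0 ≤ 1 - lk := by linarith
  have hκ0 : 0 ≤ κ := by rw [hκ]; positivity
  have step : ∀ t, ‖x (t + 1) - x' (t + 1)‖ ≤ κ * ‖x t - x' t‖ := by
    intro t
    have hs : ‖σ (W (x t) + U (u t) + b) - σ (W (x' t) + U (u t) + b)‖
        ≤ Lσ * (‖W‖ * ‖x t - x' t‖) := by
      refine (hσ _ _).trans (mul_le_mul_of_nonneg_left ?_ hLσ)
      -- The common input and the bias cancel in the difference.
      have e : W (x t) + U (u t) + b - (W (x' t) + U (u t) + b) = W (x t - x' t) := by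
        rw [map_sub]; abel
      rw [e]
      exact W.le_opNorm _
    have e : x (t + 1) - x' (t + 1) = (1 - lk) • (x t - x' t)
        + lk • (σ (W (x t) + U (u t) + b) - σ (W (x' t) + U (u t) + b)) := by
      rw [hx, hx', hf, hf, smul_sub, smul_sub]; abel
    calc ‖x (t + 1) - x' (t + 1)‖
        ≤ (1 - lk) * ‖x t - x' t‖
          + lk * ‖σ (W (x t) + U (u t) + b) - σ (W (x' t) + U (u t) + b)‖ := by
          rw [e]
          refine (norm_add_le _ _).trans_eq ?_
          rw [norm_smul_of_nonneg h1, norm_smul_of_nonneg hlk0.le]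
      _ ≤ (1 - lk) * ‖x t - x' t‖ + lk * (Lσ * (‖W‖ * ‖x t - x' t‖)) := by gcongr
      _ = κ * ‖x t - x' t‖ := by rw [hκ]; ring
  have bound : ∀ t : ℕ, ‖x t - x' t‖ ≤ κ ^ t * ‖x 0 - x' 0‖ := by
    intro t
    induction t with
    | zero => simp
    | succ t ih =>
      calc ‖x (t + 1) - x' (t + 1)‖ ≤ κ * ‖x t - x' t‖ := step t
        _ ≤ κ * (κ ^ t * ‖x 0 - x' 0‖) := by gcongr
        _ = κ ^ (t + 1) * ‖x 0 - x' 0‖ := by ring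
  refine ⟨bound, squeeze_zero (fun _ => norm_nonneg _) bound ?_⟩
  simpa using (tendsto_pow_atTop_nhds_zero_of_lt_one hκ0 hκ1).mul_const ‖x 0 - x' 0‖
end

section
/- Let f(x,u) = (1-λ)·x + λ·σ(W·x + U·u + b) denote the leaky ESN update map and suppose κ := (1−λ) + λ·‖W‖·L_σ < 1. Then for every bounded input sequence u : ℤ → ℝ^m (i.e. sup_{t∈ℤ} ‖u_t‖ < ∞) there exists a unique bounded sequence x : ℤ → ℝ^n satisfying x_{t+1} = f(x_t, u_t) for all t ∈ ℤ (the unique input-driven entire solution of the ESN). -/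
/-!
Bounded entire solutions are exactly the fixed points of the shifted update operator
`(T x) t = f (x (t - 1)) (u (t - 1))` on the Banach space of bounded sequences `ℤ → ℝ^n` with the
sup norm. Each `f · (u t)` is `κ`-Lipschitz, and `f 0 (u t)` is bounded in `t` because `u` is, so
`T` maps bounded sequences to bounded sequences and is a `κ`-contraction; the Banach fixed point
theorem gives existence and uniqueness. The argument for a general nonautonomous recursion is
`existsUnique_bounded_entire_solution`.
-/

open scoped BoundedContinuousFunction

/-- A nonautonomous recursion on `ℤ` whose steps are uniformly contracting and uniformly bounded
at the origin has exactly one bounded two-sided solution. -/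
theorem existsUnique_bounded_entire_solution {E : Type*} [NormedAddCommGroup E] [CompleteSpace E]
    (g : ℤ → E → E) (κ C : ℝ) (hκ0 : 0 ≤ κ) (hκ1 : κ < 1)
    (hg : ∀ t x y, ‖g t x - g t y‖ ≤ κ * ‖x - y‖) (hC : ∀ t, ‖g t 0‖ ≤ C) :
    ∃! x : ℤ → E, (∃ M : ℝ, ∀ t, ‖x t‖ ≤ M) ∧ ∀ t, x (t + 1) = g t (x t) := by
  have hbound : ∀ (x : ℤ →ᵇ E) (t : ℤ), ‖g (t - 1) (x (t - 1))‖ ≤ κ * ‖x‖ + C := by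
    intro x t
    have h1 := hg (t - 1) (x (t - 1)) 0
    rw [sub_zero] at h1
    have h2 := mul_le_mul_of_nonneg_left (x.norm_coe_le_norm (t - 1)) hκ0
    have h3 := norm_le_norm_sub_add (g (t - 1) (x (t - 1))) (g (t - 1) 0)
    linarith [hC (t - 1)]
  let T : (ℤ →ᵇ E) → (ℤ →ᵇ E) := fun x =>
    BoundedContinuousFunction.ofNormedAddCommGroupDiscrete
      (fun t => g (t - 1) (x (t - 1))) (κ * ‖x‖ + C) (hbound x)
  have hT : ∀ x t, T x t = g (t - 1) (x (t - 1)) := fun _ _ => rfl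
  have hcontr : ContractingWith ⟨κ, hκ0⟩ T := by
    refine ⟨by exact_mod_cast hκ1, LipschitzWith.of_dist_le_mul fun x y => ?_⟩
    refine (BoundedContinuousFunction.dist_le (mul_nonneg hκ0 dist_nonneg)).2 fun t => ?_
    rw [hT, hT, dist_eq_norm]
    refine (hg _ _ _).trans (mul_le_mul_of_nonneg_left ?_ hκ0)
    rw [← dist_eq_norm]
    exact BoundedContinuousFunction.dist_coe_le_dist _
  refine ⟨(ContractingWith.fixedPoint T hcontr : ℤ →ᵇ E),
    ⟨⟨_, fun t => BoundedContinuousFunction.norm_coe_le_norm _ t⟩, fun t => ?_⟩, ?_⟩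
  · have h := congrArg (fun z : ℤ →ᵇ E => z (t + 1)) hcontr.fixedPoint_isFixedPt
    simp only [hT, add_sub_cancel_right] at h
    exact h.symm
  · rintro y ⟨⟨M, hM⟩, hy⟩
    let y' : ℤ →ᵇ E := BoundedContinuousFunction.ofNormedAddCommGroupDiscrete y M hM
    have hfix : Function.IsFixedPt T y' := by
      ext t
      rw [hT]
      have h := hy (t - 1)
      rw [sub_add_cancel] at h
      exact h.symm
    exact congrArg (fun z : ℤ →ᵇ E => (z : ℤ → E)) (hcontr.fixedPoint_unique hfix)

/-- If `κ = (1−λ) + λ‖W‖L_σ < 1`, then for every bounded two-sided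
input sequence `u : ℤ → ℝ^m` there exists a unique bounded entire solution
`x : ℤ → ℝ^n` of `x_{t+1} = f(x_t, u_t)`. -/
theorem esn_unique_entire_solution
    (n m : ℕ) (lk : ℝ) (hlk0 : 0 < lk) (hlk1 : lk ≤ 1)
    (W : EuclideanSpace ℝ (Fin n) →L[ℝ] EuclideanSpace ℝ (Fin n))
    (U : EuclideanSpace ℝ (Fin m) →L[ℝ] EuclideanSpace ℝ (Fin n))
    (b : EuclideanSpace ℝ (Fin n))
    (σ : EuclideanSpace ℝ (Fin n) → EuclideanSpace ℝ (Fin n))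
    (Lσ : ℝ) (hLσ : 0 ≤ Lσ)
    (hσ : ∀ v v' : EuclideanSpace ℝ (Fin n), ‖σ v - σ v'‖ ≤ Lσ * ‖v - v'‖)
    (f : EuclideanSpace ℝ (Fin n) → EuclideanSpace ℝ (Fin m) → EuclideanSpace ℝ (Fin n))
    (hf : ∀ x u, f x u = (1 - lk) • x + lk • σ (W x + U u + b))
    (hκ : (1 - lk) + lk * ‖W‖ * Lσ < 1)
    (u : ℤ → EuclideanSpace ℝ (Fin m))
    (hu : ∃ M : ℝ, ∀ t : ℤ, ‖u t‖ ≤ M) :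
    ∃! x : ℤ → EuclideanSpace ℝ (Fin n),
      (∃ M : ℝ, ∀ t : ℤ, ‖x t‖ ≤ M) ∧ (∀ t : ℤ, x (t + 1) = f (x t) (u t)) := by
  obtain ⟨M, hM⟩ := hu
  have hκ0 : 0 ≤ (1 - lk) + lk * ‖W‖ * Lσ :=
    add_nonneg (sub_nonneg.2 hlk1) (by positivity)
  refine existsUnique_bounded_entire_solution (fun t x => f x (u t)) _
    (lk * (Lσ * (‖U‖ * M + ‖b‖) + ‖σ 0‖)) hκ0 hκ ?_ ?_
  · intro t x y
    have h1 : f x (u t) - f y (u t)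
        = (1 - lk) • (x - y) + lk • (σ (W x + U (u t) + b) - σ (W y + U (u t) + b)) := by
      rw [hf, hf]
      module
    have h2 : ‖σ (W x + U (u t) + b) - σ (W y + U (u t) + b)‖ ≤ Lσ * (‖W‖ * ‖x - y‖) := by
      refine (hσ _ _).trans (mul_le_mul_of_nonneg_left ?_ hLσ)
      rw [show W x + U (u t) + b - (W y + U (u t) + b) = W (x - y) by rw [map_sub]; abel]
      exact W.le_opNorm _
    calc ‖f x (u t) - f y (u t)‖
        ≤ ‖(1 - lk) • (x - y)‖
          + ‖lk • (σ (W x + U (u t) + b) - σ (W y + U (u t) + b))‖ := by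
          rw [h1]
          exact norm_add_le _ _
      _ ≤ (1 - lk) * ‖x - y‖ + lk * (Lσ * (‖W‖ * ‖x - y‖)) := by
          rw [norm_smul, norm_smul, Real.norm_of_nonneg (sub_nonneg.2 hlk1),
            Real.norm_of_nonneg hlk0.le]
          gcongr
      _ = ((1 - lk) + lk * ‖W‖ * Lσ) * ‖x - y‖ := by ring
  · intro t
    have h1 : ‖U (u t) + b‖ ≤ ‖U‖ * M + ‖b‖ :=
      (norm_add_le _ _).trans (add_le_add_left (U.le_opNorm_of_le (hM t)) _)
    have h2 := hσ (U (u t) + b) 0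
    rw [sub_zero] at h2
    have h3 := norm_le_norm_sub_add (σ (U (u t) + b)) (σ 0)
    have h4 := mul_le_mul_of_nonneg_left h1 hLσ
    change ‖f 0 (u t)‖ ≤ _
    rw [hf, smul_zero, zero_add, map_zero, zero_add, norm_smul, Real.norm_of_nonneg hlk0.le]
    exact mul_le_mul_of_nonneg_left (by linarith) hlk0.le
end

section
/- Let f(x,u) = (1-λ)·x + λ·σ(W·x + U·u), where additionally σ(0) = 0 and the bias is zero, and suppose κ := (1−λ) + λ·‖W‖·L_σ < 1. Set L_u := λ·‖U‖·L_σ. Then any trajectory x_{t+1} = f(x_t, u_t) with input satisfying ‖u_k‖ ≤ M for all k obeys the input-to-state stability bound ‖x_t‖ ≤ κ^t·‖x_0‖ + (L_u/(1−κ))·M for all t ≥ 0. -/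
/-!
Since `σ 0 = 0` and `σ` is Lipschitz, the triangle inequality gives the one-step estimate
`‖x (t + 1)‖ ≤ κ * ‖x t‖ + Lu * M`. The affine map `r ↦ κ * r + Lu * M` is monotone with fixed
point `Lu / (1 - κ) * M`, so iterating it by induction on `t` yields the bound.
-/

/-- Input-to-state stability for the zero-bias leaky ESN with
`σ(0) = 0`: if `κ = (1−λ) + λ‖W‖L_σ < 1`, `L_u = λ‖U‖L_σ`, and `‖u_k‖ ≤ M` for all
`k`, then `‖x_t‖ ≤ κ^t‖x_0‖ + (L_u/(1−κ))·M` for all `t`. -/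
theorem esn_iss_bound
    (n m : ℕ) (lk : ℝ) (hlk0 : 0 < lk) (hlk1 : lk ≤ 1)
    (W : EuclideanSpace ℝ (Fin n) →L[ℝ] EuclideanSpace ℝ (Fin n))
    (U : EuclideanSpace ℝ (Fin m) →L[ℝ] EuclideanSpace ℝ (Fin n))
    (σ : EuclideanSpace ℝ (Fin n) → EuclideanSpace ℝ (Fin n))
    (Lσ : ℝ) (hLσ : 0 ≤ Lσ)
    (hσ : ∀ v v' : EuclideanSpace ℝ (Fin n), ‖σ v - σ v'‖ ≤ Lσ * ‖v - v'‖)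
    (hσ0 : σ 0 = 0)
    (f : EuclideanSpace ℝ (Fin n) → EuclideanSpace ℝ (Fin m) → EuclideanSpace ℝ (Fin n))
    (hf : ∀ x u, f x u = (1 - lk) • x + lk • σ (W x + U u))
    (κ Lu : ℝ) (hκ : κ = (1 - lk) + lk * ‖W‖ * Lσ) (hLu : Lu = lk * ‖U‖ * Lσ)
    (hκ1 : κ < 1)
    (M : ℝ) (hM : 0 ≤ M)
    (u : ℕ → EuclideanSpace ℝ (Fin m)) (hu : ∀ k, ‖u k‖ ≤ M)
    (x : ℕ → EuclideanSpace ℝ (Fin n))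
    (hx : ∀ t, x (t + 1) = f (x t) (u t)) :
    ∀ t : ℕ, ‖x t‖ ≤ κ ^ t * ‖x 0‖ + (Lu / (1 - κ)) * M := by
  have hlk : 0 ≤ 1 - lk := sub_nonneg.mpr hlk1
  have hκ0 : 0 ≤ κ := by rw [hκ]; positivity
  have hLu0 : 0 ≤ Lu := by rw [hLu]; positivity
  have hpos : 0 < 1 - κ := sub_pos.mpr hκ1
  have step : ∀ t, ‖x (t + 1)‖ ≤ κ * ‖x t‖ + Lu * M := by
    intro t
    have hσn : ‖σ (W (x t) + U (u t))‖ ≤ Lσ * (‖W‖ * ‖x t‖ + ‖U‖ * M) := by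
      have h := hσ (W (x t) + U (u t)) 0
      rw [hσ0, sub_zero, sub_zero] at h
      refine h.trans (mul_le_mul_of_nonneg_left ?_ hLσ)
      refine (norm_add_le _ _).trans (add_le_add (W.le_opNorm _) ?_)
      exact (U.le_opNorm _).trans (mul_le_mul_of_nonneg_left (hu t) (norm_nonneg _))
    calc ‖x (t + 1)‖ = ‖(1 - lk) • x t + lk • σ (W (x t) + U (u t))‖ := by rw [hx, hf]
      _ ≤ (1 - lk) * ‖x t‖ + lk * ‖σ (W (x t) + U (u t))‖ := by
        refine (norm_add_le _ _).trans_eq ?_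
        rw [norm_smul_of_nonneg hlk, norm_smul_of_nonneg hlk0.le]
      _ ≤ (1 - lk) * ‖x t‖ + lk * (Lσ * (‖W‖ * ‖x t‖ + ‖U‖ * M)) := by gcongr
      _ = κ * ‖x t‖ + Lu * M := by rw [hκ, hLu]; ring
  -- `Lu / (1 - κ) * M` is the fixed point of the affine majorant `r ↦ κ * r + Lu * M`.
  have hfix : κ * (Lu / (1 - κ) * M) + Lu * M = Lu / (1 - κ) * M := by
    field_simp
    ring
  intro t
  induction t with
  | zero =>
    have : 0 ≤ Lu / (1 - κ) * M := by positivity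
    simpa using this
  | succ t ih =>
    calc ‖x (t + 1)‖ ≤ κ * ‖x t‖ + Lu * M := step t
      _ ≤ κ * (κ ^ t * ‖x 0‖ + Lu / (1 - κ) * M) + Lu * M := by gcongr
      _ = κ ^ (t + 1) * ‖x 0‖ + (κ * (Lu / (1 - κ) * M) + Lu * M) := by ring
      _ = κ ^ (t + 1) * ‖x 0‖ + Lu / (1 - κ) * M := by rw [hfix]
end

section
/- Consider the forward-Euler discretization of the continuous-time ESN: x ↦ x + (Δt/τ)·(−x + σ(W·x + U·u + b)) with step Δt and time constant τ satisfying 0 < Δt ≤ τ, where σ : ℝ^n → ℝ^n is globally Lipschitz with constant L_σ. If L_σ·‖W‖ < 1, then for each fixed u the Euler map is Lipschitz in x with constant 1 − (Δt/τ)·(1 − L_σ·‖W‖), which is strictly less than 1; hence the discretization preserves contraction (and thus the Echo State Property). -/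
/-!
With `α = Δt / τ ∈ (0, 1]`, the Euler map is the convex combination
`(1 - α) x + α σ(W x + U u + b)`. The first term is `(1 - α)`-Lipschitz and the second
`α Lσ ‖W‖`-Lipschitz, so the triangle inequality gives the constant
`(1 - α) + α Lσ ‖W‖ = 1 - α (1 - Lσ ‖W‖)`, which is below `1` because `α > 0` and `Lσ ‖W‖ < 1`.
-/

/-- Forward-Euler discretization of the continuous-time ESN,
`E(x,u) = x + (Δt/τ)(−x + σ(Wx + Uu + b))` with `0 < Δt ≤ τ`: if `L_σ‖W‖ < 1`
then for each fixed `u` the Euler map is Lipschitz in `x` with constant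
`1 − (Δt/τ)(1 − L_σ‖W‖)`, which is strictly less than `1` (contraction, hence the
Echo State Property is preserved by the discretization). -/
theorem euler_discretization_preserves_contraction
    (n m : ℕ)
    (W : EuclideanSpace ℝ (Fin n) →L[ℝ] EuclideanSpace ℝ (Fin n))
    (U : EuclideanSpace ℝ (Fin m) →L[ℝ] EuclideanSpace ℝ (Fin n))
    (b : EuclideanSpace ℝ (Fin n))
    (σ : EuclideanSpace ℝ (Fin n) → EuclideanSpace ℝ (Fin n))
    (Lσ : ℝ) (hLσ : 0 ≤ Lσ)
    (hσ : ∀ v v' : EuclideanSpace ℝ (Fin n), ‖σ v - σ v'‖ ≤ Lσ * ‖v - v'‖)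
    (τ Δt : ℝ) (hτ : 0 < τ) (hΔt : 0 < Δt) (hΔtτ : Δt ≤ τ)
    (E : EuclideanSpace ℝ (Fin n) → EuclideanSpace ℝ (Fin m) → EuclideanSpace ℝ (Fin n))
    (hE : ∀ x u, E x u = x + (Δt / τ) • (-x + σ (W x + U u + b)))
    (hWσ : Lσ * ‖W‖ < 1) :
    (∀ (u : EuclideanSpace ℝ (Fin m)) (x x' : EuclideanSpace ℝ (Fin n)),
        ‖E x u - E x' u‖ ≤ (1 - (Δt / τ) * (1 - Lσ * ‖W‖)) * ‖x - x'‖) ∧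
      1 - (Δt / τ) * (1 - Lσ * ‖W‖) < 1 := by
  have hα : 0 < Δt / τ := div_pos hΔt hτ
  have hα1 : Δt / τ ≤ 1 := (div_le_one hτ).mpr hΔtτ
  generalize Δt / τ = α at *
  refine ⟨fun u x x' => ?_, by nlinarith⟩
  have hσW : ‖σ (W x + U u + b) - σ (W x' + U u + b)‖ ≤ Lσ * (‖W‖ * ‖x - x'‖) := by
    refine (hσ _ _).trans (mul_le_mul_of_nonneg_left ?_ hLσ)
    have hsub : W x + U u + b - (W x' + U u + b) = W (x - x') := by
      rw [map_sub]; abel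
    rw [hsub]
    exact W.le_opNorm _
  -- Since `0 ≤ 1 - α`, the Euler map is a convex combination of the identity and `σ(W · + U u + b)`.
  have hconv : E x u - E x' u =
      (1 - α) • (x - x') + α • (σ (W x + U u + b) - σ (W x' + U u + b)) := by
    rw [hE, hE]; module
  calc ‖E x u - E x' u‖
      ≤ (1 - α) * ‖x - x'‖ + α * ‖σ (W x + U u + b) - σ (W x' + U u + b)‖ := by
        rw [hconv]
        refine (norm_add_le _ _).trans_eq ?_
        rw [norm_smul, norm_smul, Real.norm_of_nonneg (sub_nonneg.mpr hα1),
          Real.norm_of_nonneg hα.le]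
    _ ≤ (1 - α) * ‖x - x'‖ + α * (Lσ * (‖W‖ * ‖x - x'‖)) := by gcongr
    _ = (1 - α * (1 - Lσ * ‖W‖)) * ‖x - x'‖ := by ring
end

section
/- Let f(x,u) = (1-λ)·x + λ·σ(W·x + U·u + b) denote the leaky ESN update map with κ := (1−λ) + λ·‖W‖·L_σ < 1 and L_u := λ·‖U‖·L_σ. Let (x_t) and (x̄_t) be trajectories with x_0 = x̄_0 driven by inputs (u_k) and (ū_k) which agree on the recent past, i.e. u_k = ū_k for all k with t − h ≤ k < t, and satisfy ‖u_k − ū_k‖ ≤ M for all k. Then ‖x_t − x̄_t‖ ≤ (L_u·M/(1−κ))·κ^h: input perturbations older than h steps affect the state by at most a geometrically small amount (exponential fading memory and effective horizon). -/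
/-!
The update map satisfies `‖f x u - f x' u'‖ ≤ κ ‖x - x'‖ + L_u ‖u - u'‖`, so the distance of the two
states obeys a scalar linear recursion. Its fixed point `C = L_u M / (1 - κ)` bounds the distance at
every time, since the initial distance is `0`; during the last `h` steps the input term vanishes,
and each of these steps contracts the distance by the factor `κ`.
-/

/-- Exponential fading memory / effective horizon: with
`κ = (1−λ) + λ‖W‖L_σ < 1` and `L_u = λ‖U‖L_σ`, two trajectories with equal initial
state whose inputs agree on the recent past (`u_k = ū_k` for `t−h ≤ k < t`) and
differ by at most `M` everywhere satisfy `‖x_t − x̄_t‖ ≤ (L_u·M/(1−κ))·κ^h`. -/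
theorem esn_fading_memory_horizon
    (n m : ℕ) (lk : ℝ) (hlk0 : 0 < lk) (hlk1 : lk ≤ 1)
    (W : EuclideanSpace ℝ (Fin n) →L[ℝ] EuclideanSpace ℝ (Fin n))
    (U : EuclideanSpace ℝ (Fin m) →L[ℝ] EuclideanSpace ℝ (Fin n))
    (b : EuclideanSpace ℝ (Fin n))
    (σ : EuclideanSpace ℝ (Fin n) → EuclideanSpace ℝ (Fin n))
    (Lσ : ℝ) (hLσ : 0 ≤ Lσ)
    (hσ : ∀ v v' : EuclideanSpace ℝ (Fin n), ‖σ v - σ v'‖ ≤ Lσ * ‖v - v'‖)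
    (f : EuclideanSpace ℝ (Fin n) → EuclideanSpace ℝ (Fin m) → EuclideanSpace ℝ (Fin n))
    (hf : ∀ x u, f x u = (1 - lk) • x + lk • σ (W x + U u + b))
    (κ Lu : ℝ) (hκ : κ = (1 - lk) + lk * ‖W‖ * Lσ) (hLu : Lu = lk * ‖U‖ * Lσ)
    (hκ1 : κ < 1)
    (t h : ℕ) (hht : h ≤ t) (M : ℝ) (hM : 0 ≤ M)
    (u ubar : ℕ → EuclideanSpace ℝ (Fin m))
    (hrecent : ∀ k, t - h ≤ k → k < t → u k = ubar k)
    (hbound : ∀ k, ‖u k - ubar k‖ ≤ M)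
    (x xbar : ℕ → EuclideanSpace ℝ (Fin n))
    (hx0 : x 0 = xbar 0)
    (hx : ∀ s, x (s + 1) = f (x s) (u s))
    (hxbar : ∀ s, xbar (s + 1) = f (xbar s) (ubar s)) :
    ‖x t - xbar t‖ ≤ (Lu * M / (1 - κ)) * κ ^ h := by
  have hκ0 : 0 ≤ κ := by
    have : 0 ≤ lk * ‖W‖ * Lσ := by positivity
    linarith
  have hLu0 : 0 ≤ Lu := by rw [hLu]; positivity
  have h1κ : 0 < 1 - κ := by linarith
  have step : ∀ s, ‖x (s + 1) - xbar (s + 1)‖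
      ≤ κ * ‖x s - xbar s‖ + Lu * ‖u s - ubar s‖ := by
    intro s
    have hpre : ‖(W (x s) + U (u s) + b) - (W (xbar s) + U (ubar s) + b)‖
        ≤ ‖W‖ * ‖x s - xbar s‖ + ‖U‖ * ‖u s - ubar s‖ := by
      have e : (W (x s) + U (u s) + b) - (W (xbar s) + U (ubar s) + b)
          = W (x s - xbar s) + U (u s - ubar s) := by
        rw [map_sub, map_sub]; abel
      rw [e]
      exact (norm_add_le _ _).trans (add_le_add (W.le_opNorm _) (U.le_opNorm _))
    have e : x (s + 1) - xbar (s + 1) = (1 - lk) • (x s - xbar s)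
        + lk • (σ (W (x s) + U (u s) + b) - σ (W (xbar s) + U (ubar s) + b)) := by
      rw [hx, hxbar, hf, hf, smul_sub, smul_sub]; abel
    calc ‖x (s + 1) - xbar (s + 1)‖
        ≤ (1 - lk) * ‖x s - xbar s‖
          + lk * ‖σ (W (x s) + U (u s) + b) - σ (W (xbar s) + U (ubar s) + b)‖ := by
          rw [e]
          refine (norm_add_le _ _).trans_eq ?_
          rw [norm_smul, norm_smul, Real.norm_of_nonneg (sub_nonneg.2 hlk1),
            Real.norm_of_nonneg hlk0.le]
      _ ≤ (1 - lk) * ‖x s - xbar s‖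
          + lk * (Lσ * (‖W‖ * ‖x s - xbar s‖ + ‖U‖ * ‖u s - ubar s‖)) := by
          gcongr
          exact (hσ _ _).trans (mul_le_mul_of_nonneg_left hpre hLσ)
      _ = κ * ‖x s - xbar s‖ + Lu * ‖u s - ubar s‖ := by rw [hκ, hLu]; ring
  have hfix : κ * (Lu * M / (1 - κ)) + Lu * M = Lu * M / (1 - κ) := by
    field_simp; ring
  have huniform : ∀ s, ‖x s - xbar s‖ ≤ Lu * M / (1 - κ) := by
    intro s
    induction s with
    | zero => rw [hx0, sub_self, norm_zero]; positivity
    | succ s ih =>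
      calc ‖x (s + 1) - xbar (s + 1)‖
          ≤ κ * ‖x s - xbar s‖ + Lu * ‖u s - ubar s‖ := step s
        _ ≤ κ * (Lu * M / (1 - κ)) + Lu * M := by
          gcongr
          exact hbound s
        _ = _ := hfix
  have hcontract : ∀ j, j ≤ h →
      ‖x (t - h + j) - xbar (t - h + j)‖ ≤ (Lu * M / (1 - κ)) * κ ^ j := by
    intro j
    induction j with
    | zero => intro _; simpa using huniform (t - h)
    | succ j ih =>
      intro hj
      have hs := step (t - h + j)
      rw [hrecent (t - h + j) (by omega) (by omega), sub_self, norm_zero, mul_zero,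
        add_zero] at hs
      calc ‖x (t - h + (j + 1)) - xbar (t - h + (j + 1))‖
          ≤ κ * ‖x (t - h + j) - xbar (t - h + j)‖ := hs
        _ ≤ κ * ((Lu * M / (1 - κ)) * κ ^ j) :=
          mul_le_mul_of_nonneg_left (ih (by omega)) hκ0
        _ = _ := by ring
  have := hcontract h le_rfl
  rwa [Nat.sub_add_cancel hht] at this
end
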